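/- Let q be a prime power, let n ≥ 1, let f(x) = Σ_{i=0}^{n−1} a_i x^{q^i} ∈ F_{q^n}[x], and put g(x) = x^{q^n} − x. Then for every 0 ≤ m ≤ n−1, det(D_m(f)) = det(R_{m,q}(f,g)), where in forming R_{m,q}(f,g) the polynomial f is regarded as having q-degree n−1 (with a_{n−1} possibly zero) and g has q-degree n. -/

import Mathlib

/-- `D_m(f)`: the `(n-m) × (n-m)` matrix obtained from the Dickson matrix of
`f = ∑_{i=0}^{n-1} a_i x^{q^i}` by removing its first `m` columns and last `m` rows;
entry `(i,j)` is `a_((j+m-i) mod n) ^ (q ^ i)`. -/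
noncomputable def dickSub (q n m : ℕ) {F : Type*} [Field F] (a : ℕ → F) :
    Matrix (Fin (n - m)) (Fin (n - m)) F :=
  Matrix.of fun i j => a ((j.val + m + n - i.val) % n) ^ q ^ i.val

/-- The `m`-th scalar `q`-subresultant matrix `R_{m,q}(f,g)` of the `q`-polynomials
`f = ∑_{i=0}^k a_i x^{q^i}` and `g = ∑_{i=0}^l b_i x^{q^i}`. -/
noncomputable def Rmat (q k l m : ℕ) {F : Type*} [Field F] (a b : ℕ → F) :
    Matrix (Fin (k + l - 2 * m)) (Fin (k + l - 2 * m)) F :=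
  Matrix.of fun i j =>
    if i.val < l - m then
      if i.val ≤ j.val ∧ j.val ≤ k + i.val then
        a (k + i.val - j.val) ^ q ^ (l - m - 1 - i.val) else 0
    else
      if i.val - (l - m) ≤ j.val ∧ j.val ≤ l + (i.val - (l - m)) then
        b (l + (i.val - (l - m)) - j.val) ^ q ^ (k - m - 1 - (i.val - (l - m))) else 0

/-!
The rows of `R_{m,q}(f,g)` are the coefficient vectors of the powers `f^{q^i}`, `i < n - m`, and
`g^{q^r}`, `r < n - 1 - m`, from `x^{q^{2n-m-2}}` down to `x^{q^m}`. List the exponents upwards and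
split the columns at `x^{q^n}`: up to a rotation of an odd number of columns, which is an even
permutation, the matrix becomes `[B, A; E, 1]`, with determinant `det (B - A * E)`. Subtracting
`A * E` replaces `x^{q^{n+d}}` by `x^{q^d}`, i.e. it reduces `f^{q^i}` modulo `x^{q^n} - x`, and the
coefficients of the reduced powers are the entries of the Dickson matrix.
-/

open Matrix

section Determinants

theorem sign_finCycle {n : ℕ} (k : Fin n) :
    Equiv.Perm.sign (finCycle k) = (-1) ^ ((n - 1) * k.val) := by
  have hpow : finCycle k = finRotate n ^ k.val := by
    ext x
    rw [finCycle_eq_finRotate_iterate, Equiv.Perm.iterate_eq_pow]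
  rw [hpow, map_pow, sign_finRotate, pow_mul]

theorem det_submatrix_equiv_trans_perm {ι κ R : Type*} [Fintype ι] [DecidableEq ι] [Fintype κ]
    [DecidableEq κ] [CommRing R] (M : Matrix κ κ R) (e : ι ≃ κ) (σ : Equiv.Perm κ) :
    (M.submatrix e (e.trans σ)).det = Equiv.Perm.sign σ * M.det := by
  rw [← det_permute', ← det_submatrix_equiv_self e, submatrix_submatrix, Equiv.coe_trans,
    Function.id_comp]

end Determinants

section FrobeniusPowers

variable {F : Type*} [Field F]

/-- The coefficient of `x^{q^d}` in `f^{q^s}`, where `f = ∑_{i=0}^k c_i x^{q^i}` and `q` is a power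
of the characteristic. -/
def frobCoeff (q k : ℕ) (c : ℕ → F) (s d : ℕ) : F :=
  if s ≤ d ∧ d ≤ k + s then c (d - s) ^ q ^ s else 0

theorem dickSub_apply (q : ℕ) {n m : ℕ} (a : ℕ → F) (i j : Fin (n - m)) :
    dickSub q n m a i j =
      frobCoeff q (n - 1) a i (m + j) + frobCoeff q (n - 1) a i (n + (m + j)) := by
  have hi := i.isLt
  have hj := j.isLt
  simp only [dickSub, of_apply, frobCoeff]
  by_cases h : i.val ≤ m + j.val
  · rw [if_pos (by omega), if_neg (by omega), add_zero,
      show j.val + m + n - i.val = m + j.val - i.val + n by omega, Nat.add_mod_right,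
      Nat.mod_eq_of_lt (by omega)]
  · rw [if_neg (by omega), if_pos (by omega), zero_add,
      show j.val + m + n - i.val = n + (m + j.val) - i.val by omega,
      Nat.mod_eq_of_lt (by omega)]

variable (F) in
/-- The coefficient sequence of the `q`-polynomial `x^{q^n} - x`. -/
def frobSubIdCoeff (n : ℕ) : ℕ → F :=
  fun t => if t = n then 1 else if t = 0 then -1 else 0

theorem frobCoeff_frobSubIdCoeff {q : ℕ} (hq : q ≠ 0) (hneg : (-1 : F) ^ q = -1) (n s d : ℕ) :
    frobCoeff q n (frobSubIdCoeff F n) s d =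
      if d = n + s then 1 else if d = s then -1 else 0 := by
  have hneg_pow : (-1 : F) ^ q ^ s = -1 := by
    induction s with
    | zero => rw [pow_zero, pow_one]
    | succ s ih => rw [pow_succ, pow_mul, ih, hneg]
  have hzero_pow : (0 : F) ^ q ^ s = 0 := zero_pow (pow_ne_zero s hq)
  simp only [frobCoeff, frobSubIdCoeff, ite_pow, one_pow, hneg_pow, hzero_pow]
  split_ifs <;> first | rfl | omega

end FrobeniusPowers

section Subresultant

variable {F : Type*} [Field F] {k l m : ℕ}

/-- Enumeration of the rows of `R_{m,q}(f,g)` by the powers they come from: `f^{q^i}` for `inl i`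
and `g^{q^r}` for `inr r`. -/
def subresRow (hk : m ≤ k) (hl : m < l) : Fin (l - m) ⊕ Fin (k - m) ≃ Fin (k + l - 2 * m) :=
  ((Equiv.sumCongr Fin.revPerm Fin.revPerm).trans finSumFinEquiv).trans (finCongr (by omega))

/-- Enumeration of the columns of `R_{m,q}(f,g)` by the monomials they come from: `x^{q^{m+c}}` for
`inl c` and `x^{q^{l+r}}` for `inr r`. -/
def subresCol (hk : m ≤ k) (hl : m < l) : Fin (l - m) ⊕ Fin (k - m) ≃ Fin (k + l - 2 * m) :=
  (subresRow hk hl).trans (finCycle ⟨k - m, by omega⟩)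

theorem val_subresRow_inl (hk : m ≤ k) (hl : m < l) (i : Fin (l - m)) :
    (subresRow hk hl (.inl i)).val = l - m - 1 - i := by
  simp only [subresRow, Equiv.trans_apply, Equiv.sumCongr_apply, Sum.map_inl, Fin.revPerm_apply,
    finSumFinEquiv_apply_left, finCongr_apply, Fin.val_cast, Fin.val_castAdd, Fin.val_rev]
  omega

theorem val_subresRow_inr (hk : m ≤ k) (hl : m < l) (r : Fin (k - m)) :
    (subresRow hk hl (.inr r)).val = l - m + (k - m - 1 - r) := by
  simp only [subresRow, Equiv.trans_apply, Equiv.sumCongr_apply, Sum.map_inr, Fin.revPerm_apply,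
    finSumFinEquiv_apply_right, finCongr_apply, Fin.val_cast, Fin.val_natAdd, Fin.val_rev]
  omega

theorem val_subresCol_inl (hk : m ≤ k) (hl : m < l) (c : Fin (l - m)) :
    (subresCol hk hl (.inl c)).val = k + l - m - 1 - (m + c) := by
  have hc := c.isLt
  rw [subresCol, Equiv.trans_apply, finCycle_apply, Fin.val_add, val_subresRow_inl,
    Nat.mod_eq_of_lt (by dsimp only; omega)]
  dsimp only
  omega

theorem val_subresCol_inr (hk : m ≤ k) (hl : m < l) (r : Fin (k - m)) :
    (subresCol hk hl (.inr r)).val = k + l - m - 1 - (l + r) := by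
  have hr := r.isLt
  rw [subresCol, Equiv.trans_apply, finCycle_apply, Fin.val_add, val_subresRow_inr]
  dsimp only
  rw [show l - m + (k - m - 1 - r.val) + (k - m) = k - m - 1 - r.val + (k + l - 2 * m) by omega,
    Nat.add_mod_right, Nat.mod_eq_of_lt (by omega)]
  omega

theorem Rmat_subresRow_inl (q : ℕ) (a b : ℕ → F) (hk : m ≤ k) (hl : m < l) (i : Fin (l - m))
    (j : Fin (k + l - 2 * m)) :
    Rmat q k l m a b (subresRow hk hl (.inl i)) j = frobCoeff q k a i (k + l - m - 1 - j) := by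
  have hi := i.isLt
  have hj := j.isLt
  simp only [Rmat, of_apply, val_subresRow_inl, frobCoeff]
  rw [if_pos (by omega), show l - m - 1 - (l - m - 1 - i.val) = i by omega]
  refine if_ctx_congr (by omega) (fun _ => ?_) fun _ => rfl
  rw [show k + (l - m - 1 - i.val) - j.val = k + l - m - 1 - j.val - i.val by omega]

theorem Rmat_subresRow_inr (q : ℕ) (a b : ℕ → F) (hk : m ≤ k) (hl : m < l) (r : Fin (k - m))
    (j : Fin (k + l - 2 * m)) :
    Rmat q k l m a b (subresRow hk hl (.inr r)) j = frobCoeff q l b r (k + l - m - 1 - j) := by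
  have hr := r.isLt
  have hj := j.isLt
  simp only [Rmat, of_apply, val_subresRow_inr, frobCoeff]
  rw [if_neg (by omega), Nat.add_sub_cancel_left,
    show k - m - 1 - (k - m - 1 - r.val) = r by omega]
  refine if_ctx_congr (by omega) (fun _ => ?_) fun _ => rfl
  rw [show l + (k - m - 1 - r.val) - j.val = k + l - m - 1 - j.val - r.val by omega]

/-- The block of coefficients of the powers `f^{q^i}`, `i < s`, at the monomials `x^{q^{u+j}}`,
`j < t`, where `f = ∑_{i=0}^k c_i x^{q^i}`. -/
def frobBlock (q k : ℕ) (c : ℕ → F) (u s t : ℕ) : Matrix (Fin s) (Fin t) F :=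
  of fun i j => frobCoeff q k c i (u + j)

theorem Rmat_submatrix_eq_fromBlocks (q : ℕ) (a b : ℕ → F) (hk : m ≤ k) (hl : m < l) :
    (Rmat q k l m a b).submatrix (subresRow hk hl) (subresCol hk hl) =
      fromBlocks (frobBlock q k a m (l - m) (l - m)) (frobBlock q k a l (l - m) (k - m))
        (frobBlock q l b m (k - m) (l - m)) (frobBlock q l b l (k - m) (k - m)) := by
  have hinl (c : Fin (l - m)) : k + l - m - 1 - (subresCol hk hl (.inl c)).val = m + c := by
    rw [val_subresCol_inl]
    omega
  have hinr (r : Fin (k - m)) : k + l - m - 1 - (subresCol hk hl (.inr r)).val = l + r := by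
    rw [val_subresCol_inr]
    omega
  ext (i | r) (c | r') <;>
    simp only [submatrix_apply, Rmat_subresRow_inl, Rmat_subresRow_inr, hinl, hinr, frobBlock,
      fromBlocks_apply₁₁, fromBlocks_apply₁₂, fromBlocks_apply₂₁, fromBlocks_apply₂₂, of_apply]

theorem det_Rmat_eq_det_fromBlocks (q : ℕ) (a b : ℕ → F) (hk : m ≤ k) (hl : m < l)
    (hodd : Odd (k + l)) :
    (Rmat q k l m a b).det =
      (fromBlocks (frobBlock q k a m (l - m) (l - m)) (frobBlock q k a l (l - m) (k - m))
        (frobBlock q l b m (k - m) (l - m)) (frobBlock q l b l (k - m) (k - m))).det := by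
  have heven : Even (k + l - 2 * m - 1) := by
    obtain ⟨t, ht⟩ := hodd
    exact ⟨t - m, by omega⟩
  rw [← Rmat_submatrix_eq_fromBlocks q a b hk hl, subresCol, det_submatrix_equiv_trans_perm,
    sign_finCycle, (heven.mul_right _).neg_one_pow, Units.val_one, Int.cast_one, one_mul]

end Subresultant

section Reduction

variable {F : Type*} [Field F] {q : ℕ}

theorem frobBlock_frobSubIdCoeff_self (hq : q ≠ 0) (hneg : (-1 : F) ^ q = -1) {n t : ℕ}
    (ht : t ≤ n) : frobBlock q n (frobSubIdCoeff F n) n t t = 1 := by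
  ext r s
  have hr := r.isLt
  simp only [frobBlock, of_apply, frobCoeff_frobSubIdCoeff hq hneg, one_apply, Fin.ext_iff]
  split_ifs <;> first | rfl | omega

theorem frobBlock_frobSubIdCoeff_apply (hq : q ≠ 0) (hneg : (-1 : F) ^ q = -1) {n u s t : ℕ}
    (hut : u + t ≤ n) (r : Fin s) (c : Fin t) :
    frobBlock q n (frobSubIdCoeff F n) u s t r c = if u + c.val = r then -1 else 0 := by
  have hc := c.isLt
  rw [frobBlock, of_apply, frobCoeff_frobSubIdCoeff hq hneg, if_neg (by omega)]

theorem frobBlock_mul_frobBlock_frobSubIdCoeff (hq : q ≠ 0) (hneg : (-1 : F) ^ q = -1) {n m : ℕ}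
    (a : ℕ → F) (hm : m < n) (i j : Fin (n - m)) :
    (frobBlock q (n - 1) a n (n - m) (n - 1 - m) *
        frobBlock q n (frobSubIdCoeff F n) m (n - 1 - m) (n - m)) i j =
      -frobCoeff q (n - 1) a i (n + (m + j)) := by
  simp only [mul_apply, frobBlock_frobSubIdCoeff_apply hq hneg (Nat.add_sub_of_le hm.le).le,
    mul_ite, mul_neg_one, mul_zero]
  by_cases h : m + j.val < n - 1 - m
  · rw [Finset.sum_eq_single_of_mem ⟨m + j.val, h⟩ (Finset.mem_univ _)
      fun r _ hr => if_neg fun hval => hr (Fin.ext hval.symm), if_pos rfl]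
    rfl
  · have hi := i.isLt
    rw [Finset.sum_eq_zero fun r _ => if_neg (by omega), frobCoeff, if_neg (by omega), neg_zero]

theorem dickSub_eq_frobBlock_sub (hq : q ≠ 0) (hneg : (-1 : F) ^ q = -1) {n m : ℕ} (a : ℕ → F)
    (hm : m < n) :
    dickSub q n m a = frobBlock q (n - 1) a m (n - m) (n - m) -
      frobBlock q (n - 1) a n (n - m) (n - 1 - m) *
        frobBlock q n (frobSubIdCoeff F n) m (n - 1 - m) (n - m) := by
  ext i j
  rw [Matrix.sub_apply, frobBlock_mul_frobBlock_frobSubIdCoeff hq hneg a hm, sub_neg_eq_add,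
    dickSub_apply, frobBlock, of_apply]

end Reduction

theorem neg_one_pow_prime_pow_of_card {F : Type*} [Field F] [Fintype F] {p d : ℕ} (hp : p.Prime)
    (hF : Fintype.card F = p ^ d) (e : ℕ) : (-1 : F) ^ p ^ e = -1 := by
  have : Fact p.Prime := ⟨hp⟩
  have : CharP F p := charP_of_card_eq_prime_pow hF
  exact neg_one_pow_char_pow ..

theorem stmt_6_general {F : Type*} [Field F] {q n m : ℕ} (hq : q ≠ 0) (hneg : (-1 : F) ^ q = -1)
    (hm : m < n) (a : ℕ → F) :
    (dickSub q n m a).det =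
      (Rmat q (n - 1) n m a (fun t => if t = n then 1 else if t = 0 then -1 else 0)).det := by
  change _ = (Rmat q (n - 1) n m a (frobSubIdCoeff F n)).det
  rw [det_Rmat_eq_det_fromBlocks q a _ (by omega) hm ⟨n - 1, by omega⟩,
    frobBlock_frobSubIdCoeff_self hq hneg (by omega), det_fromBlocks_one₂₂,
    dickSub_eq_frobBlock_sub hq hneg a hm]

/-- Lemma: for `f = ∑_{i=0}^{n-1} a_i x^{q^i} ∈ F_{q^n}[x]` (regarded as having `q`-degree
`n-1`) and `g(x) = x^{q^n} - x` (coefficients `b_n = 1`, `b_0 = -1`, else `0`), one has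
`det D_m(f) = det R_{m,q}(f,g)` for all `0 ≤ m ≤ n-1`. -/
theorem stmt_6 (p e q n m : ℕ) (hp : p.Prime) (he : 0 < e) (hq : q = p ^ e)
    (hn : 0 < n) (hm : m ≤ n - 1)
    (F : Type*) [Field F] [Fintype F] (hF : Fintype.card F = q ^ n)
    (a : ℕ → F) :
    (dickSub q n m a).det =
      (Rmat q (n - 1) n m a (fun t => if t = n then 1 else if t = 0 then -1 else 0)).det := by
  subst hq
  exact stmt_6_general (pow_ne_zero e hp.ne_zero)
    (neg_one_pow_prime_pow_of_card hp (hF.trans (pow_mul p e n).symm) e) (by omega) a
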